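/- arXiv:2209.00242 — 2 statements merged into one kernel-verified Lean document; each statement's English description precedes it below -/
import Mathlib

section
/- Let ε > 0, 1 < p < ∞, let b : [0,∞)×𝕋ⁿ → ℝⁿ be smooth on the torus 𝕋ⁿ, let Θ be a smooth strictly positive solution of Θ_t + div(bΘ) = ε ΔΘ with Θ(0,x) = 1, and let v be a smooth nowhere-vanishing solution of v_t + div(bv) = ε Δv with v(0,·) = v_0. Then for all t ≥ 0: ∫_{𝕋ⁿ} |v(t,x)|^p / Θ(t,x)^{p−1} dx + ε (4(p−1)/p) ∫_0^t ∫_{𝕋ⁿ} Θ |∇(|v|^{p/2}/Θ^{p/2})|² dx dτ = ∫_{𝕋ⁿ} |v_0(x)|^p dx. -/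
open MeasureTheory

/-- Partial derivative in the `i`-th coordinate direction. -/
noncomputable def pderiv₁₂ {n : ℕ} (i : Fin n) (g : (Fin n → ℝ) → ℝ) (x : Fin n → ℝ) : ℝ :=
  fderiv ℝ g x (Pi.single i 1)

/-- A function on `ℝⁿ` representing a function on the torus `𝕋ⁿ = [0,1]ⁿ`:
it is periodic with respect to the lattice `ℤⁿ`. -/
def TorusFun₁₂ {n : ℕ} (g : (Fin n → ℝ) → ℝ) : Prop :=
  ∀ (x : Fin n → ℝ) (k : Fin n → ℤ), g (x + fun i => (k i : ℝ)) = g x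

lemma pd_mul {n : ℕ} (i : Fin n) {f g : (Fin n → ℝ) → ℝ} (hf : Differentiable ℝ f)
    (hg : Differentiable ℝ g) (x : Fin n → ℝ) :
    pderiv₁₂ i (fun y => f y * g y) x = pderiv₁₂ i f x * g x + f x * pderiv₁₂ i g x := by
  unfold pderiv₁₂
  have h := ((hf x).hasFDerivAt.mul (hg x).hasFDerivAt).fderiv
  have h2 : fderiv ℝ (fun y => f y * g y) x = f x • fderiv ℝ g x + g x • fderiv ℝ f x := h
  rw [h2]
  simp
  ring

lemma pd_add {n : ℕ} (i : Fin n) {f g : (Fin n → ℝ) → ℝ} (hf : Differentiable ℝ f)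
    (hg : Differentiable ℝ g) (x : Fin n → ℝ) :
    pderiv₁₂ i (fun y => f y + g y) x = pderiv₁₂ i f x + pderiv₁₂ i g x := by
  unfold pderiv₁₂
  rw [fderiv_fun_add (hf x) (hg x)]
  simp

lemma pd_sub {n : ℕ} (i : Fin n) {f g : (Fin n → ℝ) → ℝ} (hf : Differentiable ℝ f)
    (hg : Differentiable ℝ g) (x : Fin n → ℝ) :
    pderiv₁₂ i (fun y => f y - g y) x = pderiv₁₂ i f x - pderiv₁₂ i g x := by
  unfold pderiv₁₂
  rw [fderiv_fun_sub (hf x) (hg x)]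
  simp

lemma pd_cmul {n : ℕ} (i : Fin n) (c : ℝ) {f : (Fin n → ℝ) → ℝ} (hf : Differentiable ℝ f)
    (x : Fin n → ℝ) :
    pderiv₁₂ i (fun y => c * f y) x = c * pderiv₁₂ i f x := by
  unfold pderiv₁₂
  rw [fderiv_const_mul (hf x)]
  simp

lemma pd_rpow {n : ℕ} (i : Fin n) (r : ℝ) {f : (Fin n → ℝ) → ℝ} (hf : Differentiable ℝ f)
    (hpos : ∀ x, 0 < f x) (x : Fin n → ℝ) :
    pderiv₁₂ i (fun y => f y ^ r) x = r * f x ^ (r - 1) * pderiv₁₂ i f x := by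
  unfold pderiv₁₂
  rw [((hf x).hasFDerivAt.rpow_const (p := r) (Or.inl (hpos x).ne')).fderiv]
  simp

lemma pd_neg {n : ℕ} (i : Fin n) (f : (Fin n → ℝ) → ℝ) :
    pderiv₁₂ i (fun y => - f y) = fun x => - pderiv₁₂ i f x := by
  funext x
  unfold pderiv₁₂
  rw [fderiv_fun_neg]
  simp

lemma pd_smooth {n : ℕ} (i : Fin n) {f : (Fin n → ℝ) → ℝ} (hf : ContDiff ℝ (⊤ : ℕ∞) f) :
    ContDiff ℝ (⊤ : ℕ∞) (pderiv₁₂ i f) := by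
  unfold pderiv₁₂
  exact (hf.fderiv_right (m := ((⊤ : ℕ∞) : WithTop ℕ∞)) (by simp)).clm_apply contDiff_const

lemma pd_per {n : ℕ} (i : Fin n) {f : (Fin n → ℝ) → ℝ} (hf : TorusFun₁₂ f) :
    TorusFun₁₂ (pderiv₁₂ i f) := by
  intro x k
  unfold pderiv₁₂
  rw [← fderiv_comp_add_right]
  congr 2
  funext y
  exact hf y k

/-- The integral of the divergence of a smooth periodic field vanishes. -/
lemma div_zero12 {m : ℕ} (G : Fin (m + 1) → (Fin (m + 1) → ℝ) → ℝ)
    (hG : ∀ i, ContDiff ℝ (⊤ : ℕ∞) (G i)) (hper : ∀ i, TorusFun₁₂ (G i)) :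
    ∫ x in Set.Icc (0 : Fin (m + 1) → ℝ) 1, ∑ i, pderiv₁₂ i (G i) x = 0 := by
  have hd : ∀ i, Differentiable ℝ (G i) := fun i => (hG i).differentiable (by simp)
  have hc : Continuous fun x => ∑ i, pderiv₁₂ i (G i) x :=
    continuous_finsetSum _ fun i _ => (pd_smooth i (hG i)).continuous
  have key := integral_divergence_of_hasFDerivAt_off_countable' (0 : Fin (m + 1) → ℝ) 1
    (fun i => by simp) G (fun i x => fderiv ℝ (G i) x) ∅ Set.countable_empty
    (fun i => (hd i).continuous.continuousOn) (fun x _ i => (hd i x).hasFDerivAt)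
    (hc.continuousOn.integrableOn_compact isCompact_Icc)
  unfold pderiv₁₂
  rw [key]
  apply Finset.sum_eq_zero
  intro i _
  rw [sub_eq_zero]
  congr 1
  funext y
  have h := hper i (i.insertNth (0 : ℝ) y) (Pi.single i 1)
  have e : (i.insertNth (0 : ℝ) y + fun j => (((Pi.single i 1 : Fin (m + 1) → ℤ) j : ℤ) : ℝ))
      = i.insertNth (1 : ℝ) y := by
    funext j
    refine Fin.succAboveCases i ?_ ?_ j
    · simp
    · intro j
      simp
  rw [e] at h
  exact h

/-- Space-integrated dissipation identity on a fixed time slice. -/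
lemma slice12 {m : ℕ} (ε p : ℝ) (hp : 1 < p) (b : Fin (m + 1) → (Fin (m + 1) → ℝ) → ℝ)
    (hb : ∀ i, ContDiff ℝ (⊤ : ℕ∞) (b i)) (hbper : ∀ i, TorusFun₁₂ (b i))
    (θ w T W : (Fin (m + 1) → ℝ) → ℝ)
    (hθ : ContDiff ℝ (⊤ : ℕ∞) θ) (hθper : TorusFun₁₂ θ) (hθpos : ∀ x, 0 < θ x)
    (hw : ContDiff ℝ (⊤ : ℕ∞) w) (hwper : TorusFun₁₂ w) (hwpos : ∀ x, 0 < w x)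
    (hT : ∀ x, T x + ∑ i, pderiv₁₂ i (fun y => b i y * θ y) x
        = ε * ∑ i, pderiv₁₂ i (pderiv₁₂ i θ) x)
    (hW : ∀ x, W x + ∑ i, pderiv₁₂ i (fun y => b i y * w y) x
        = ε * ∑ i, pderiv₁₂ i (pderiv₁₂ i w) x) :
    ∫ x in Set.Icc (0 : Fin (m + 1) → ℝ) 1,
      (p * (w x / θ x) ^ (p - 1) * W x + (1 - p) * (w x / θ x) ^ p * T x)
    = - (ε * (4 * (p - 1) / p) * ∫ x in Set.Icc (0 : Fin (m + 1) → ℝ) 1,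
        θ x * ∑ i, (pderiv₁₂ i (fun y => w y ^ (p / 2) / θ y ^ (p / 2)) x) ^ 2) := by
  have dd : ∀ {f : (Fin (m + 1) → ℝ) → ℝ}, ContDiff ℝ (⊤ : ℕ∞) f → Differentiable ℝ f :=
    fun h => h.differentiable (by simp)
  obtain ⟨q, hq⟩ : ∃ q : (Fin (m + 1) → ℝ) → ℝ, q = fun x => w x / θ x := ⟨_, rfl⟩
  have hqpos : ∀ x, 0 < q x := fun x => by rw [hq]; exact div_pos (hwpos x) (hθpos x)
  have hqs : ContDiff ℝ (⊤ : ℕ∞) q := by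
    rw [hq]; exact hw.div hθ fun x => (hθpos x).ne'
  have hqr : ∀ r : ℝ, ContDiff ℝ (⊤ : ℕ∞) (fun x => q x ^ r) := fun r =>
    hqs.rpow_const_of_ne fun x => (hqpos x).ne'
  have hqper : TorusFun₁₂ q := by
    intro x k; simp only [hq]; rw [hwper x k, hθper x k]
  have hwq : w = fun x => q x * θ x := by
    funext x; simp only [hq]; rw [div_mul_cancel₀ _ (hθpos x).ne']
  have hpow : (fun y => w y ^ (p / 2) / θ y ^ (p / 2)) = fun y => q y ^ (p / 2) := by
    funext y; simp only [hq]; rw [Real.div_rpow (hwpos y).le (hθpos y).le]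
  have hqx : ∀ x, w x / θ x = q x := fun x => by rw [hq]
  simp only [hpow, hqx]
  let J : Fin (m + 1) → (Fin (m + 1) → ℝ) → ℝ := fun i x => ε * pderiv₁₂ i w x - b i x * w x
  let K : Fin (m + 1) → (Fin (m + 1) → ℝ) → ℝ := fun i x => ε * pderiv₁₂ i θ x - b i x * θ x
  have hJ : ∀ i, ContDiff ℝ (⊤ : ℕ∞) (J i) := fun i =>
    (contDiff_const.mul (pd_smooth i hw)).sub ((hb i).mul hw)
  have hK : ∀ i, ContDiff ℝ (⊤ : ℕ∞) (K i) := fun i =>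
    (contDiff_const.mul (pd_smooth i hθ)).sub ((hb i).mul hθ)
  let G : Fin (m + 1) → (Fin (m + 1) → ℝ) → ℝ := fun i x =>
    p * (q x ^ (p - 1) * J i x) + (1 - p) * (q x ^ p * K i x)
  have hG1 : ∀ i, ContDiff ℝ (⊤ : ℕ∞) (fun x => q x ^ (p - 1) * J i x) := fun i =>
    (hqr _).mul (hJ i)
  have hG2 : ∀ i, ContDiff ℝ (⊤ : ℕ∞) (fun x => q x ^ p * K i x) := fun i =>
    (hqr _).mul (hK i)
  have hG : ∀ i, ContDiff ℝ (⊤ : ℕ∞) (G i) := fun i =>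
    (contDiff_const.mul (hG1 i)).add (contDiff_const.mul (hG2 i))
  have hGper : ∀ i, TorusFun₁₂ (G i) := by
    intro i x k
    simp only [G, J, K]
    rw [hqper x k, hwper x k, hθper x k, hbper i x k, pd_per i hwper x k, pd_per i hθper x k]
  have hz := div_zero12 G hG hGper
  have hpd : ∀ i x, pderiv₁₂ i (G i) x
      = p * q x ^ (p - 1) * (ε * pderiv₁₂ i (pderiv₁₂ i w) x - pderiv₁₂ i (fun y => b i y * w y) x)
        + (1 - p) * q x ^ p *
          (ε * pderiv₁₂ i (pderiv₁₂ i θ) x - pderiv₁₂ i (fun y => b i y * θ y) x)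
        + ε * (4 * (p - 1) / p) * (θ x * (pderiv₁₂ i (fun y => q y ^ (p / 2)) x) ^ 2) := by
    intro i x
    have eJ : pderiv₁₂ i (J i) x
        = ε * pderiv₁₂ i (pderiv₁₂ i w) x - pderiv₁₂ i (fun y => b i y * w y) x := by
      rw [pd_sub i (dd (contDiff_const.mul (pd_smooth i hw))) (dd ((hb i).mul hw)),
        pd_cmul i _ (dd (pd_smooth i hw))]
    have eK : pderiv₁₂ i (K i) x
        = ε * pderiv₁₂ i (pderiv₁₂ i θ) x - pderiv₁₂ i (fun y => b i y * θ y) x := by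
      rw [pd_sub i (dd (contDiff_const.mul (pd_smooth i hθ))) (dd ((hb i).mul hθ)),
        pd_cmul i _ (dd (pd_smooth i hθ))]
    rw [← eJ, ← eK]
    have ew : pderiv₁₂ i w x = pderiv₁₂ i q x * θ x + q x * pderiv₁₂ i θ x := by
      conv_lhs => rw [hwq]
      exact pd_mul i (dd hqs) (dd hθ) x
    have e1 : pderiv₁₂ i (G i) x = p * (pderiv₁₂ i (fun y => q y ^ (p - 1)) x * J i x
        + q x ^ (p - 1) * pderiv₁₂ i (J i) x) + (1 - p) * (pderiv₁₂ i (fun y => q y ^ p) x * K i x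
        + q x ^ p * pderiv₁₂ i (K i) x) := by
      rw [pd_add i (dd (contDiff_const.mul (hG1 i))) (dd (contDiff_const.mul (hG2 i))),
        pd_cmul i _ (dd (hG1 i)), pd_cmul i _ (dd (hG2 i)), pd_mul i (dd (hqr _)) (dd (hJ i)),
        pd_mul i (dd (hqr _)) (dd (hK i))]
    rw [e1, pd_rpow i _ (dd hqs) hqpos, pd_rpow i _ (dd hqs) hqpos, pd_rpow i _ (dd hqs) hqpos]
    have r1 : q x ^ (p - 1) = q x ^ (p - 1 - 1) * q x := by
      rw [← Real.rpow_add_one (hqpos x).ne']; congr 1; ring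
    have r2 : (q x ^ (p / 2 - 1)) ^ 2 = q x ^ (p - 1 - 1) := by
      rw [← Real.rpow_mul_natCast (hqpos x).le]; congr 1; push_cast; ring
    have hJx : J i x = ε * (pderiv₁₂ i q x * θ x + q x * pderiv₁₂ i θ x) - b i x * (q x * θ x) := by
      simp only [J]
      rw [ew, ← hqx x, div_mul_cancel₀ _ (hθpos x).ne']
    have hKx : K i x = ε * pderiv₁₂ i θ x - b i x * θ x := rfl
    have r3 : ε * (4 * (p - 1) / p) *
        (θ x * (p / 2 * q x ^ (p / 2 - 1) * pderiv₁₂ i q x) ^ 2)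
        = ε * (p * (p - 1)) * (θ x * q x ^ (p - 1 - 1) * (pderiv₁₂ i q x) ^ 2) := by
      rw [← r2]
      have : p ≠ 0 := by linarith
      field_simp
      ring
    rw [r3, hJx, hKx, r1]
    ring
  have hpt : ∀ x, p * q x ^ (p - 1) * W x + (1 - p) * q x ^ p * T x
      = ∑ i, pderiv₁₂ i (G i) x - ε * (4 * (p - 1) / p) *
        (θ x * ∑ i, (pderiv₁₂ i (fun y => q y ^ (p / 2)) x) ^ 2) := by
    intro x
    simp only [hpd, Finset.sum_add_distrib, ← Finset.mul_sum, Finset.sum_sub_distrib]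
    have h1 : W x = ε * ∑ i, pderiv₁₂ i (pderiv₁₂ i w) x
      - ∑ i, pderiv₁₂ i (fun y => b i y * w y) x := by linarith [hW x]
    have h2 : T x = ε * ∑ i, pderiv₁₂ i (pderiv₁₂ i θ) x
      - ∑ i, pderiv₁₂ i (fun y => b i y * θ y) x := by linarith [hT x]
    rw [h1, h2]
    ring
  simp only [hpt]
  have c1 : Continuous fun x => ∑ i, pderiv₁₂ i (G i) x :=
    continuous_finsetSum _ fun i _ => (pd_smooth i (hG i)).continuous
  have c2 : Continuous fun x => ε * (4 * (p - 1) / p) *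
        (θ x * ∑ i, (pderiv₁₂ i (fun y => q y ^ (p / 2)) x) ^ 2) :=
    continuous_const.mul (hθ.continuous.mul (continuous_finsetSum _ fun i _ =>
      (pd_smooth i (hqr _)).continuous.pow 2))
  rw [integral_sub (c1.continuousOn.integrableOn_compact isCompact_Icc)
    (c2.continuousOn.integrableOn_compact isCompact_Icc), hz, integral_const_mul]
  ring

lemma time_deriv12 {n : ℕ} {f : ℝ → (Fin n → ℝ) → ℝ}
    (hf : ContDiff ℝ (⊤ : ℕ∞) (Function.uncurry f)) :
    (∀ t x, HasDerivAt (fun s => f s x) (deriv (fun s => f s x) t) t) ∧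
    Continuous (fun z : ℝ × (Fin n → ℝ) => deriv (fun s => f s z.2) z.1) := by
  have h : ∀ t x, HasDerivAt (fun s => f s x) (fderiv ℝ (Function.uncurry f) (t, x) (1, 0)) t := by
    intro t x
    have h1 := (hf.differentiable (by simp) (t, x)).hasFDerivAt
    have h2 : HasDerivAt (fun s : ℝ => (s, x)) ((1 : ℝ), (0 : Fin n → ℝ)) t :=
      (hasDerivAt_id t).prodMk (hasDerivAt_const t x)
    exact h1.comp_hasDerivAt t h2
  refine ⟨fun t x => (h t x).differentiableAt.hasDerivAt, ?_⟩
  have e : (fun z : ℝ × (Fin n → ℝ) => deriv (fun s => f s z.2) z.1)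
      = fun z => fderiv ℝ (Function.uncurry f) z (1, 0) := by
    funext z; exact (h z.1 z.2).deriv
  rw [e]
  exact (hf.continuous_fderiv (by simp)).clm_apply continuous_const

lemma slice_smooth12 {n : ℕ} {f : ℝ → (Fin n → ℝ) → ℝ}
    (hf : ContDiff ℝ (⊤ : ℕ∞) (Function.uncurry f)) (t : ℝ) : ContDiff ℝ (⊤ : ℕ∞) (f t) :=
  hf.comp (contDiff_const.prodMk contDiff_id)

/-- The identity for positive `w`. -/
lemma core12 {m : ℕ} (ε : ℝ) (p : ℝ) (hp : 1 < p)
    (b : ℝ → (Fin (m + 1) → ℝ) → (Fin (m + 1) → ℝ))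
    (hb : ContDiff ℝ (⊤ : ℕ∞) (Function.uncurry b))
    (hbper : ∀ t i, TorusFun₁₂ (fun x => b t x i))
    (Θ v : ℝ → (Fin (m + 1) → ℝ) → ℝ)
    (hΘ : ContDiff ℝ (⊤ : ℕ∞) (Function.uncurry Θ))
    (hΘper : ∀ t, TorusFun₁₂ (Θ t))
    (hΘpos : ∀ t x, 0 ≤ t → 0 < Θ t x)
    (hΘinit : ∀ x, Θ 0 x = 1)
    (hΘPDE : ∀ t x, 0 ≤ t →
      deriv (fun s => Θ s x) t + ∑ i, pderiv₁₂ i (fun y => b t y i * Θ t y) x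
        = ε * ∑ i, pderiv₁₂ i (pderiv₁₂ i (Θ t)) x)
    (hv : ContDiff ℝ (⊤ : ℕ∞) (Function.uncurry v))
    (hvper : ∀ t, TorusFun₁₂ (v t))
    (hvpos : ∀ t x, 0 ≤ t → 0 < v t x)
    (hvPDE : ∀ t x, 0 ≤ t →
      deriv (fun s => v s x) t + ∑ i, pderiv₁₂ i (fun y => b t y i * v t y) x
        = ε * ∑ i, pderiv₁₂ i (pderiv₁₂ i (v t)) x) (t : ℝ) (ht : 0 ≤ t) :
      (∫ x in Set.Icc (0 : Fin (m + 1) → ℝ) 1, |v t x| ^ p / Θ t x ^ (p - 1))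
          + ε * (4 * (p - 1) / p) *
              ∫ τ in (0:ℝ)..t, ∫ x in Set.Icc (0 : Fin (m + 1) → ℝ) 1,
                Θ τ x *
                  ∑ i, (pderiv₁₂ i (fun y => |v τ y| ^ (p / 2) / Θ τ y ^ (p / 2)) x) ^ 2
        = ∫ x in Set.Icc (0 : Fin (m + 1) → ℝ) 1, |v 0 x| ^ p := by
  obtain ⟨dΘ, cdΘ⟩ := time_deriv12 hΘ
  obtain ⟨dv, cdv⟩ := time_deriv12 hv
  let F : ℝ → (Fin (m + 1) → ℝ) → ℝ := fun τ x =>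
    p * (v τ x / Θ τ x) ^ (p - 1) * deriv (fun s => v s x) τ
      + (1 - p) * (v τ x / Θ τ x) ^ p * deriv (fun s => Θ s x) τ
  let E : ℝ → (Fin (m + 1) → ℝ) → ℝ := fun τ x => v τ x ^ p / Θ τ x ^ (p - 1)
  let S : Set (ℝ × (Fin (m + 1) → ℝ)) := Set.Ici 0 ×ˢ Set.univ
  have cv : ContinuousOn (fun z : ℝ × (Fin (m + 1) → ℝ) => v z.1 z.2) S :=
    hv.continuous.continuousOn
  have cΘ : ContinuousOn (fun z : ℝ × (Fin (m + 1) → ℝ) => Θ z.1 z.2) S :=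
    hΘ.continuous.continuousOn
  have pv : ∀ z ∈ S, 0 < v z.1 z.2 := fun z hz => hvpos _ _ hz.1
  have pΘ : ∀ z ∈ S, 0 < Θ z.1 z.2 := fun z hz => hΘpos _ _ hz.1
  have cq : ∀ r : ℝ, ContinuousOn (fun z : ℝ × (Fin (m + 1) → ℝ) =>
      (v z.1 z.2 / Θ z.1 z.2) ^ r) S := fun r =>
    (cv.div cΘ fun z hz => (pΘ z hz).ne').rpow_const
      fun z hz => Or.inl (div_pos (pv z hz) (pΘ z hz)).ne'
  have cF : ContinuousOn (Function.uncurry F) S :=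
    ((continuousOn_const.mul (cq _)).mul cdv.continuousOn).add
      ((continuousOn_const.mul (cq _)).mul cdΘ.continuousOn)
  have cE : ContinuousOn (Function.uncurry E) S :=
    (cv.rpow_const fun z hz => Or.inl (pv z hz).ne').div
      (cΘ.rpow_const fun z hz => Or.inl (pΘ z hz).ne')
      fun z hz => (Real.rpow_pos_of_pos (pΘ z hz) _).ne'
  have hEd : ∀ τ x, 0 ≤ τ → HasDerivAt (fun s => E s x) (F τ x) τ := by
    intro τ x hτ
    have hv0 := hvpos τ x hτ
    have hΘ0 := hΘpos τ x hτ
    have h := ((dv τ x).rpow_const (p := p) (Or.inl hv0.ne')).div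
      ((dΘ τ x).rpow_const (p := p - 1) (Or.inl hΘ0.ne'))
      (Real.rpow_pos_of_pos hΘ0 _).ne'
    refine HasDerivAt.congr_deriv (f := fun s => E s x) h ?_
    simp only [F]
    rw [Real.div_rpow hv0.le hΘ0.le, Real.div_rpow hv0.le hΘ0.le]
    have r1 : v τ x ^ p = v τ x ^ (p - 1) * v τ x := by
      rw [← Real.rpow_add_one hv0.ne']; congr 1; ring
    have r2 : Θ τ x ^ p = Θ τ x ^ (p - 1 - 1) * Θ τ x * Θ τ x := by
      rw [← Real.rpow_add_one hΘ0.ne', ← Real.rpow_add_one hΘ0.ne']; congr 1; ring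
    have r3 : Θ τ x ^ (p - 1) = Θ τ x ^ (p - 1 - 1) * Θ τ x := by
      rw [← Real.rpow_add_one hΘ0.ne']; congr 1; ring
    rw [r1, r2, r3]
    have := (Real.rpow_pos_of_pos hΘ0 (p - 1 - 1)).ne'
    have := hΘ0.ne'
    field_simp
    ring
  have secx : ∀ {f : ℝ → (Fin (m + 1) → ℝ) → ℝ}, ContinuousOn (Function.uncurry f) S →
      ∀ x, ContinuousOn (fun s => f s x) (Set.Icc 0 t) := fun {f} hf x =>
    hf.comp (f := fun s : ℝ => (s, x)) (by fun_prop) fun s hs => ⟨hs.1, trivial⟩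
  have sect : ∀ {f : ℝ → (Fin (m + 1) → ℝ) → ℝ}, ContinuousOn (Function.uncurry f) S →
      ∀ s, 0 ≤ s → Continuous (f s) := fun {f} hf s hs => by
    rw [← continuousOn_univ]
    exact hf.comp (f := fun x : (Fin (m + 1) → ℝ) => (s, x)) (by fun_prop)
      fun x _ => ⟨hs, trivial⟩
  have hftc : ∀ x, ∫ τ in (0:ℝ)..t, F τ x = E t x - E 0 x := fun x =>
    intervalIntegral.integral_eq_sub_of_hasDerivAt_of_le ht (secx cE x)
      (fun s hs => hEd s x hs.1.le)
      (ContinuousOn.intervalIntegrable (by rw [Set.uIcc_of_le ht]; exact secx cF x))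
  have hswap : ∫ τ in (0:ℝ)..t, ∫ x in Set.Icc (0 : Fin (m + 1) → ℝ) 1, F τ x
      = ∫ x in Set.Icc (0 : Fin (m + 1) → ℝ) 1, ∫ τ in (0:ℝ)..t, F τ x := by
    apply intervalIntegral_integral_swap
    rw [Set.uIoc_of_le ht, Measure.prod_restrict, ← Measure.volume_eq_prod]
    have : IntegrableOn (Function.uncurry F)
        (Set.Icc 0 t ×ˢ Set.Icc (0 : Fin (m + 1) → ℝ) 1) volume :=
      (cF.mono fun z hz => ⟨hz.1.1, trivial⟩).integrableOn_compact
        (isCompact_Icc.prod isCompact_Icc)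
    exact this.mono_set (Set.prod_mono Set.Ioc_subset_Icc_self subset_rfl)
  have hsl : ∫ τ in (0:ℝ)..t, ∫ x in Set.Icc (0 : Fin (m + 1) → ℝ) 1, F τ x
      = ∫ τ in (0:ℝ)..t, - (ε * (4 * (p - 1) / p) * ∫ x in Set.Icc (0 : Fin (m + 1) → ℝ) 1,
        Θ τ x * ∑ i, (pderiv₁₂ i (fun y => |v τ y| ^ (p / 2) / Θ τ y ^ (p / 2)) x) ^ 2) := by
    apply intervalIntegral.integral_congr
    intro τ hτ
    rw [Set.uIcc_of_le ht] at hτ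
    have ha : ∀ y, |v τ y| = v τ y := fun y => abs_of_pos (hvpos τ y hτ.1)
    simp only [ha]
    exact slice12 ε p hp (fun i x => b τ x i)
      (fun i => contDiff_pi.1 (hb.comp (contDiff_const.prodMk contDiff_id)) i)
      (hbper τ) (Θ τ) (v τ) _ _ (slice_smooth12 hΘ τ) (hΘper τ) (fun x => hΘpos τ x hτ.1)
      (slice_smooth12 hv τ) (hvper τ) (fun x => hvpos τ x hτ.1)
      (fun x => hΘPDE τ x hτ.1) (fun x => hvPDE τ x hτ.1)
  rw [hswap] at hsl
  simp only [hftc] at hsl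
  rw [intervalIntegral.integral_neg, intervalIntegral.integral_const_mul,
    integral_sub ((sect cE t ht).continuousOn.integrableOn_compact isCompact_Icc)
    ((sect cE 0 le_rfl).continuousOn.integrableOn_compact isCompact_Icc)] at hsl
  have e0 : (fun x => |v 0 x| ^ p) = E 0 := by
    funext x
    simp only [E]
    rw [hΘinit, abs_of_pos (hvpos 0 x le_rfl)]
    simp
  have et : (fun x => |v t x| ^ p / Θ t x ^ (p - 1)) = E t := by
    funext x
    simp only [E]
    rw [abs_of_pos (hvpos t x ht)]
  rw [et, e0]
  linarith

lemma sign12 {n : ℕ} {v : ℝ → (Fin n → ℝ) → ℝ} (hv : Continuous (Function.uncurry v))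
    (hvne : ∀ t x, 0 ≤ t → v t x ≠ 0) :
    (∀ t x, 0 ≤ t → 0 < v t x) ∨ (∀ t x, 0 ≤ t → v t x < 0) := by
  have hS : IsPreconnected ((Set.Ici (0:ℝ)) ×ˢ (Set.univ : Set (Fin n → ℝ))) :=
    isPreconnected_Ici.prod isPreconnected_univ
  by_contra hcon
  push Not at hcon
  obtain ⟨⟨t, x, ht, h1⟩, s, y, hs, h2⟩ := hcon
  obtain ⟨z, hz, hz0⟩ := hS.intermediate_value (a := (t, x)) (b := (s, y)) ⟨ht, trivial⟩
    ⟨hs, trivial⟩ hv.continuousOn (show (0:ℝ) ∈ Set.Icc _ _ from ⟨h1, h2⟩)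
  exact hvne z.1 z.2 hz.1 hz0

/-- The integrated entropy identity on the torus:
`∫ |v(t)|^p/Θ(t)^{p-1} dx + ε (4(p-1)/p) ∫₀ᵗ ∫ Θ |∇(|v|^{p/2}/Θ^{p/2})|² dx dτ
  = ∫ |v₀|^p dx`. -/
theorem stmt12 (n : ℕ) (hn : 0 < n)
    (ε : ℝ) (hε : 0 < ε)
    (p : ℝ) (hp : 1 < p)
    (b : ℝ → (Fin n → ℝ) → (Fin n → ℝ))
    (hb : ContDiff ℝ (⊤ : ℕ∞) (Function.uncurry b))
    (hbper : ∀ t i, TorusFun₁₂ (fun x => b t x i))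
    (Θ v : ℝ → (Fin n → ℝ) → ℝ)
    (hΘ : ContDiff ℝ (⊤ : ℕ∞) (Function.uncurry Θ))
    (hΘper : ∀ t, TorusFun₁₂ (Θ t))
    (hΘpos : ∀ t x, 0 ≤ t → 0 < Θ t x)
    (hΘinit : ∀ x, Θ 0 x = 1)
    (hΘPDE : ∀ t x, 0 ≤ t →
      deriv (fun s => Θ s x) t + ∑ i, pderiv₁₂ i (fun y => b t y i * Θ t y) x
        = ε * ∑ i, pderiv₁₂ i (pderiv₁₂ i (Θ t)) x)
    (hv : ContDiff ℝ (⊤ : ℕ∞) (Function.uncurry v))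
    (hvper : ∀ t, TorusFun₁₂ (v t))
    (hvne : ∀ t x, 0 ≤ t → v t x ≠ 0)
    (hvPDE : ∀ t x, 0 ≤ t →
      deriv (fun s => v s x) t + ∑ i, pderiv₁₂ i (fun y => b t y i * v t y) x
        = ε * ∑ i, pderiv₁₂ i (pderiv₁₂ i (v t)) x)
    (v₀ : (Fin n → ℝ) → ℝ) (hv₀ : ∀ x, v 0 x = v₀ x) :
    ∀ t, 0 ≤ t →
      (∫ x in Set.Icc (0 : Fin n → ℝ) 1, |v t x| ^ p / Θ t x ^ (p - 1))
          + ε * (4 * (p - 1) / p) *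
              ∫ τ in (0:ℝ)..t, ∫ x in Set.Icc (0 : Fin n → ℝ) 1,
                Θ τ x *
                  ∑ i, (pderiv₁₂ i (fun y => |v τ y| ^ (p / 2) / Θ τ y ^ (p / 2)) x) ^ 2
        = ∫ x in Set.Icc (0 : Fin n → ℝ) 1, |v₀ x| ^ p := by
  obtain ⟨m, rfl⟩ : ∃ m, n = m + 1 := ⟨n - 1, by omega⟩
  intro t ht
  have e0 : v₀ = v 0 := funext fun x => (hv₀ x).symm
  rw [e0]
  rcases sign12 hv.continuous hvne with hpos | hneg
  · exact core12 ε p hp b hb hbper Θ v hΘ hΘper hΘpos hΘinit hΘPDE hv hvper hpos hvPDE t ht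
  · have h := core12 ε p hp b hb hbper Θ (fun t x => - v t x) hΘ hΘper hΘpos hΘinit hΘPDE hv.neg
      (fun t x k => congrArg Neg.neg (hvper t x k)) (fun t x h => neg_pos.2 (hneg t x h)) ?_ t ht
    · simpa only [abs_neg] using h
    · intro t x ht
      have h := hvPDE t x ht
      have d : deriv (fun s => - v s x) t = - deriv (fun s => v s x) t := deriv.fun_neg
      rw [d]
      simp only [mul_neg, pd_neg, Finset.sum_neg_distrib]
      linarith
end

section
/- Let ε > 0, let A : ℝ² → ℝ^{2×2} be smooth, let D > 0, and let u : [0,∞)×ℝ → ℝ² be a bounded smooth solution of u_t + A(u) u_x = ε u_{xx} with |u(t,x)| ≤ D for all (t,x) and with initial data u(0,·) = J_ε ∗ u_0, where u_0 ∈ L^∞(ℝ; ℝ²) with ‖u_0‖_{L^∞} ≤ D and J_ε is the standard Friedrichs mollifier at scale ε. Then there is a constant C depending only on D and A such that ‖u_x(t,·)‖_{L^∞(ℝ)} ≤ C ε^{−1} for all t ≥ 0. -/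
open Matrix MeasureTheory

/-- The standard bump function generating the Friedrichs mollifier. -/
noncomputable def bump₁₆ (x : ℝ) : ℝ :=
  if |x| < 1 then Real.exp (-(1 - x ^ 2)⁻¹) else 0

/-- The standard (normalized) Friedrichs mollifier kernel. -/
noncomputable def stdMollifier₁₆ (x : ℝ) : ℝ :=
  bump₁₆ x / ∫ y, bump₁₆ y

/-- The Friedrichs mollifier at scale `ε`. -/
noncomputable def friedrichs₁₆ (ε x : ℝ) : ℝ :=
  ε⁻¹ * stdMollifier₁₆ (x / ε)

/-- second derivative test (necessary condition) -/
lemma second_deriv_nonpos {g g' : ℝ → ℝ} {g2 a : ℝ} (hg : ∀ s, HasDerivAt g (g' s) s)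
    (hg' : HasDerivAt g' g2 a) (hmax : IsLocalMax g a) : g2 ≤ 0 := by
  by_contra hpos
  push Not at hpos
  have e : deriv g = g' := funext fun s => (hg s).deriv
  have h0 : deriv g a = 0 := hmax.deriv_eq_zero
  have hmin : IsLocalMin g a := by
    apply isLocalMin_of_deriv_deriv_pos _ h0 (hg a).continuousAt
    rw [e, hg'.deriv]; exact hpos
  have hc : g =ᶠ[nhds a] fun _ => g a := by
    filter_upwards [hmin, hmax] with s h1 h2
    exact le_antisymm h2 h1
  have hc' : g' =ᶠ[nhds a] fun _ => 0 := by
    have := hc.deriv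
    rw [e] at this
    simpa using this
  have := hc'.deriv_eq
  rw [hg'.deriv] at this
  simp at this
  linarith

lemma left_deriv_nonneg {h : ℝ → ℝ} {h' a : ℝ} (ha : 0 < a) (hd : HasDerivAt h h' a)
    (hmax : ∀ t, 0 ≤ t → t ≤ a → h t ≤ h a) : 0 ≤ h' := by
  have ht := (hasDerivAt_iff_tendsto_slope.1 hd).mono_left
    (nhdsWithin_mono a (show Set.Iio a ⊆ {a}ᶜ from fun x hx => ne_of_lt hx))
  apply ge_of_tendsto ht
  filter_upwards [Ioo_mem_nhdsLT ha] with t ht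
  rw [slope_def_field]
  exact div_nonneg_of_nonpos (by linarith [hmax t ht.1.le ht.2.le]) (by linarith [ht.2])

lemma grad_bound (v : ℝ → ℝ → ℝ) (hv : ContDiff ℝ (⊤ : ℕ∞) (Function.uncurry v))
    (ε D r F G t0 x0 : ℝ) (hε : 0 < ε) (hr : 0 < r) (hF : 0 ≤ F) (hG : 0 ≤ G) (hD : 0 ≤ D)
    (ht0 : 0 ≤ t0)
    (hb : ∀ t x, 0 ≤ t → |v t x| ≤ D)
    (hf : ∀ t x, 0 ≤ t → t ≤ t0 → |x - x0| ≤ r →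
      |deriv (fun s => v s x) t - ε * deriv (deriv (v t)) x| < F)
    (hL : ∀ x y, |v 0 x - v 0 y| ≤ G * |x - y|) :
    deriv (v t0) x0 ≤ r * F / (2 * ε) + D / r + G := by
  have hx : ∀ t, ContDiff ℝ (⊤ : ℕ∞) (v t) := fun t =>
    hv.comp (contDiff_prodMk_right t)
  have htt : ∀ x, ContDiff ℝ (⊤ : ℕ∞) (fun s => v s x) := fun x =>
    hv.comp (contDiff_prodMk_left x)
  have hx1 : ∀ t x, HasDerivAt (v t) (deriv (v t) x) x := fun t x =>
    ((hx t).differentiable (by simp)).differentiableAt.hasDerivAt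
  have hx2 : ∀ t x, HasDerivAt (deriv (v t)) (deriv (deriv (v t)) x) x := fun t x => by
    have h2 : ContDiff ℝ (1 + 1) (v t) := (hx t).of_le (by
      rw [one_add_one_eq_two]; exact WithTop.coe_le_coe.2 le_top)
    have := (contDiff_succ_iff_deriv.1 h2).2.2
    exact (this.differentiable (by simp)).differentiableAt.hasDerivAt
  have ht1 : ∀ t x, HasDerivAt (fun s => v s x) (deriv (fun s => v s x) t) t := fun t x =>
    ((htt x).differentiable (by simp)).differentiableAt.hasDerivAt
  obtain ⟨B, hB⟩ : ∃ B, B = F / ε := ⟨_, rfl⟩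
  obtain ⟨K, hK⟩ : ∃ K, K = B * r + 2 * D / r + 2 * G := ⟨_, rfl⟩
  have hB0 : 0 ≤ B := by rw [hB]; positivity
  have hBF : ε * B = F := by rw [hB]; field_simp
  obtain ⟨z, hz⟩ : ∃ z : ℝ × ℝ → ℝ, z = fun p =>
    v p.1 (x0 + p.2) - v p.1 (x0 - p.2) - (K * p.2 - B * p.2 ^ 2) := ⟨_, rfl⟩
  have hvc : Continuous (Function.uncurry v) := hv.continuous
  have hzc : Continuous z := by
    rw [hz]
    have h1 : Continuous fun p : ℝ × ℝ => v p.1 (x0 + p.2) :=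
      hvc.comp (f := fun p : ℝ × ℝ => (p.1, x0 + p.2)) (by fun_prop)
    have h2 : Continuous fun p : ℝ × ℝ => v p.1 (x0 - p.2) :=
      hvc.comp (f := fun p : ℝ × ℝ => (p.1, x0 - p.2)) (by fun_prop)
    fun_prop
  have hcomp : IsCompact (Set.Icc (0:ℝ) t0 ×ˢ Set.Icc (0:ℝ) r) := isCompact_Icc.prod isCompact_Icc
  obtain ⟨⟨t, s⟩, ⟨ht, hs⟩, hmax⟩ := hcomp.exists_isMaxOn
    ⟨(0, 0), ⟨by simpa using ht0, by simpa using hr.le⟩⟩ hzc.continuousOn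
  have hmax' : ∀ t' s', 0 ≤ t' → t' ≤ t0 → 0 ≤ s' → s' ≤ r → z (t', s') ≤ z (t, s) :=
    fun t' s' a b c d => hmax (show (t', s') ∈ _ from ⟨⟨a, b⟩, ⟨c, d⟩⟩)
  simp only [Set.mem_Icc] at ht hs
  have hzle : z (t, s) ≤ 0 := by
    rcases hs.1.eq_or_lt with h0 | hs0
    · rw [hz]; simp [← h0]
    have hpsi : B * s ^ 2 ≤ B * r * s := by
      have := mul_le_mul_of_nonneg_left hs.2 (mul_nonneg hB0 hs.1)
      nlinarith
    have hDr : 0 ≤ 2 * D / r * s := by positivity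
    rcases hs.2.eq_or_lt with h0 | hsr
    · have h1 := abs_le.1 (hb t (x0 + s) ht.1)
      have h2 := abs_le.1 (hb t (x0 - s) ht.1)
      have h3 : 2 * D / r * s = 2 * D := by rw [h0]; field_simp
      have h4 : 0 ≤ G * s := by positivity
      rw [hz, hK]; simp only
      nlinarith
    rcases ht.1.eq_or_lt with h0 | htp
    · have h1 := (abs_le.1 (hL (x0 + s) (x0 - s))).2
      have h2 : |x0 + s - (x0 - s)| = 2 * s := by
        rw [abs_of_nonneg] <;> linarith
      rw [h2] at h1
      rw [hz, hK, ← h0]; simp only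
      nlinarith
    exfalso
    have hzt := left_deriv_nonneg (h := fun t => z (t, s))
      (h' := deriv (fun q => v q (x0 + s)) t - deriv (fun q => v q (x0 - s)) t) htp
      (by
        rw [hz]
        exact ((ht1 t (x0 + s)).sub (ht1 t (x0 - s))).sub_const (K * s - B * s ^ 2))
      (fun t' a b => hmax' t' s a (b.trans ht.2) hs.1 hs.2)
    have hzs := second_deriv_nonpos (g := fun s => z (t, s))
      (g' := fun s => deriv (v t) (x0 + s) + deriv (v t) (x0 - s) - (K - 2 * B * s))
      (g2 := deriv (deriv (v t)) (x0 + s) - deriv (deriv (v t)) (x0 - s) + 2 * B) (a := s)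
      (by
        intro s
        rw [hz]
        have h1 := (hx1 t (x0 + s)).comp_const_add x0 s
        have h2 := (hx1 t (x0 - s)).comp_const_sub x0 s
        have h3 := ((hasDerivAt_id s).const_mul K).sub (((hasDerivAt_id s).pow 2).const_mul B)
        refine ((h1.sub h2).sub h3).congr_deriv ?_
        simp; ring)
      (by
        have h1 := (hx2 t (x0 + s)).comp_const_add x0 s
        have h2 := (hx2 t (x0 - s)).comp_const_sub x0 s
        have h3 := ((hasDerivAt_id s).const_mul (2 * B)).const_sub K
        refine ((h1.add h2).sub h3).congr_deriv ?_
        simp; ring)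
      (by
        filter_upwards [Ioo_mem_nhds hs0 hsr] with s' hs'
        exact hmax' t s' ht.1 ht.2 hs'.1.le hs'.2.le)
    have f1 := (abs_lt.1 (hf t (x0 + s) ht.1 ht.2 (by
      rw [abs_le]; constructor <;> linarith))).2
    have f2 := (abs_lt.1 (hf t (x0 - s) ht.1 ht.2 (by
      rw [abs_le]; constructor <;> linarith))).1
    have := mul_nonpos_of_nonneg_of_nonpos hε.le hzs
    nlinarith
  have hd : HasDerivAt (fun s => v t0 (x0 + s) - v t0 (x0 - s)) (2 * deriv (v t0) x0) 0 := by
    have h1 := HasDerivAt.comp_const_add (f := v t0) (f' := deriv (v t0) x0) x0 0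
      (by simpa using hx1 t0 x0)
    have h2 := HasDerivAt.comp_const_sub (f := v t0) (f' := deriv (v t0) x0) x0 0
      (by simpa using hx1 t0 x0)
    exact (h1.sub h2).congr_deriv (by ring)
  have h2K : 2 * deriv (v t0) x0 ≤ K := by
    have htd := (hasDerivAt_iff_tendsto_slope.1 hd).mono_left
      (nhdsWithin_mono 0 (show Set.Ioi (0:ℝ) ⊆ {0}ᶜ from fun x hx => ne_of_gt hx))
    apply le_of_tendsto htd
    filter_upwards [Ioo_mem_nhdsGT hr] with s hs
    have h1 := (hmax' t0 s ht0 le_rfl hs.1.le hs.2.le).trans hzle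
    rw [hz] at h1
    rw [slope_def_field]
    simp only [add_zero, sub_zero, sub_self] at h1 ⊢
    rw [div_le_iff₀ hs.1]
    nlinarith [mul_nonneg hB0 (sq_nonneg s)]
  have : K = 2 * (r * F / (2 * ε) + D / r + G) := by
    rw [hK, hB]; field_simp
  linarith

lemma bump_lip : ∃ Λ : ℝ, 0 ≤ Λ ∧ Continuous stdMollifier₁₆ ∧
    (∀ x, 1 ≤ |x| → stdMollifier₁₆ x = 0) ∧
    ∀ x y, |stdMollifier₁₆ x - stdMollifier₁₆ y| ≤ Λ * |x - y| := by
  have e : bump₁₆ = fun x => expNegInvGlue (1 - x ^ 2) := by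
    funext x
    unfold bump₁₆ expNegInvGlue
    by_cases h : |x| < 1
    · rw [if_pos h, if_neg]
      have := (sq_lt_one_iff_abs_lt_one x).2 h
      linarith
    · rw [if_neg h, if_pos]
      have := mt (sq_lt_one_iff_abs_lt_one x).1 h
      linarith
  have hc : ContDiff ℝ 1 stdMollifier₁₆ := by
    unfold stdMollifier₁₆
    rw [e]
    apply ContDiff.div_const
    exact expNegInvGlue.contDiff.comp (by fun_prop)
  have h0 : ∀ x, 1 ≤ |x| → stdMollifier₁₆ x = 0 := by
    intro x hx
    unfold stdMollifier₁₆ bump₁₆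
    rw [if_neg (not_lt.2 hx), zero_div]
  have hs : HasCompactSupport stdMollifier₁₆ := by
    apply HasCompactSupport.of_support_subset_isCompact (isCompact_Icc (a := (-1:ℝ)) (b := 1))
    intro x hx
    by_contra hn
    apply hx
    apply h0
    by_contra h
    push Not at h
    exact hn ⟨(abs_lt.1 h).1.le, (abs_lt.1 h).2.le⟩
  obtain ⟨C, hC⟩ := hc.lipschitzWith_of_hasCompactSupport hs (by simp)
  refine ⟨C, C.2, hc.continuous, h0, fun x y => ?_⟩
  simpa [Real.dist_eq] using hC.dist_le_mul x y

lemma init_lip : ∃ Λ : ℝ, 0 ≤ Λ ∧ ∀ (D : ℝ), 0 < D → ∀ ε : ℝ, 0 < ε → ∀ u₀ : ℝ → (Fin 2 → ℝ),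
    Measurable u₀ → (∀ x, ‖u₀ x‖ ≤ D) → ∀ x x' : ℝ,
    ‖(∫ y, friedrichs₁₆ ε (x - y) • u₀ y) - ∫ y, friedrichs₁₆ ε (x' - y) • u₀ y‖
      ≤ (4 * Λ * D / ε) * |x - x'| := by
  obtain ⟨Λ, hΛ, hc, h0, hl⟩ := bump_lip
  refine ⟨Λ, hΛ, fun D hD ε hε u₀ hm hb x x' => ?_⟩
  have hfz : ∀ a, ε ≤ |a| → friedrichs₁₆ ε a = 0 := by
    intro a ha
    unfold friedrichs₁₆
    rw [h0, mul_zero]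
    rw [abs_div, abs_of_pos hε, one_le_div hε]; exact ha
  have hfl : ∀ a b, |friedrichs₁₆ ε a - friedrichs₁₆ ε b| ≤ Λ / ε ^ 2 * |a - b| := by
    intro a b
    unfold friedrichs₁₆
    rw [← mul_sub, abs_mul, abs_of_pos (inv_pos.2 hε)]
    have := hl (a / ε) (b / ε)
    rw [← sub_div, abs_div, abs_of_pos hε] at this
    calc _ ≤ ε⁻¹ * (Λ * (|a - b| / ε)) := by gcongr
      _ = _ := by field_simp
  have hfc : Continuous (friedrichs₁₆ ε) := by
    unfold friedrichs₁₆; fun_prop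
  have hint : ∀ x, Integrable (fun y => friedrichs₁₆ ε (x - y) • u₀ y) := by
    intro x
    have h1 : Integrable (fun y => friedrichs₁₆ ε (x - y)) := by
      apply Continuous.integrable_of_hasCompactSupport (by fun_prop)
      apply HasCompactSupport.of_support_subset_isCompact (isCompact_Icc (a := x - ε) (b := x + ε))
      intro y hy
      by_contra hn
      apply hy
      apply hfz
      by_contra h
      push Not at h
      have := abs_lt.1 h
      exact hn ⟨by linarith, by linarith⟩
    exact h1.smul_bdd D hm.aestronglyMeasurable (Filter.Eventually.of_forall hb)
  rw [← integral_sub (hint x) (hint x')]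
  let S := Set.Icc (x - ε) (x + ε) ∪ Set.Icc (x' - ε) (x' + ε)
  have hz : ∀ y, y ∉ S → friedrichs₁₆ ε (x - y) • u₀ y - friedrichs₁₆ ε (x' - y) • u₀ y = 0 := by
    intro y hy
    simp only [S, Set.mem_union, Set.mem_Icc, not_or] at hy
    rw [hfz, hfz, zero_smul, sub_zero]
    · by_contra h
      push Not at h
      have := abs_lt.1 h
      exact hy.2 ⟨by linarith, by linarith⟩
    · by_contra h
      push Not at h
      have := abs_lt.1 h
      exact hy.1 ⟨by linarith, by linarith⟩
  rw [← setIntegral_eq_integral_of_forall_compl_eq_zero hz]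
  have hvol : volume S ≤ ENNReal.ofReal (4 * ε) := by
    refine (measure_union_le _ _).trans ?_
    rw [Real.volume_Icc, Real.volume_Icc, ← ENNReal.ofReal_add (by linarith) (by linarith)]
    apply ENNReal.ofReal_le_ofReal; linarith
  have hreal : volume.real S ≤ 4 * ε := ENNReal.toReal_le_of_le_ofReal (by linarith) hvol
  have := norm_setIntegral_le_of_norm_le_const (μ := volume) (s := S)
    (f := fun y => friedrichs₁₆ ε (x - y) • u₀ y - friedrichs₁₆ ε (x' - y) • u₀ y)
    (C := Λ / ε ^ 2 * |x - x'| * D) (hvol.trans_lt ENNReal.ofReal_lt_top) (by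
      intro y _
      rw [← sub_smul, norm_smul, Real.norm_eq_abs]
      have h := hfl (x - y) (x' - y)
      rw [sub_sub_sub_cancel_right] at h
      exact mul_le_mul h (hb y) (norm_nonneg _) (by positivity))
  refine this.trans ?_
  calc _ ≤ Λ / ε ^ 2 * |x - x'| * D * (4 * ε) := by gcongr
    _ = _ := by field_simp

lemma A_bound (A : (Fin 2 → ℝ) → Matrix (Fin 2) (Fin 2) ℝ)
    (hA : ∀ i j, ContDiff ℝ (⊤ : ℕ∞) (fun w => A w i j)) (D : ℝ) :
    ∃ M : ℝ, 0 ≤ M ∧ ∀ w, ‖w‖ ≤ D → ∀ p i, |(A w *ᵥ p) i| ≤ M * ‖p‖ := by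
  have h : ∀ i j, ∃ C : ℝ, ∀ w, ‖w‖ ≤ D → |A w i j| ≤ C := by
    intro i j
    obtain ⟨C, hC⟩ := (isCompact_closedBall (0 : Fin 2 → ℝ) D).exists_bound_of_continuousOn
      (hA i j).continuous.continuousOn
    exact ⟨C, fun w hw => hC w (by simpa using hw)⟩
  choose C hC using h
  refine ⟨∑ i, ∑ j, |C i j|, by positivity, fun w hw p i => ?_⟩
  have h1 : |(A w *ᵥ p) i| ≤ ∑ j, |C i j| * ‖p‖ := by
    unfold Matrix.mulVec dotProduct
    refine (Finset.abs_sum_le_sum_abs _ _).trans (Finset.sum_le_sum fun j _ => ?_)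
    rw [abs_mul]
    exact mul_le_mul ((hC i j w hw).trans (le_abs_self _)) (norm_le_pi_norm p j) (abs_nonneg _)
      (abs_nonneg _)
  refine h1.trans ?_
  rw [← Finset.sum_mul]
  refine mul_le_mul_of_nonneg_right ?_ (norm_nonneg p)
  exact Finset.single_le_sum (f := fun i => ∑ j, |C i j|) (fun i _ => by positivity)
    (Finset.mem_univ i)

/-- Parabolic smoothing for the viscous `2×2` system
`u_t + A(u)u_x = ε u_xx` with initial data `J_ε ∗ u₀`, `‖u₀‖_{L^∞} ≤ D`:
there is `C` depending only on `D` and `A` with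
`‖u_x(t,·)‖_{L^∞} ≤ C ε⁻¹` for all `t ≥ 0`. -/
theorem stmt16
    (A : (Fin 2 → ℝ) → Matrix (Fin 2) (Fin 2) ℝ)
    (hA : ∀ i j, ContDiff ℝ (⊤ : ℕ∞) (fun w => A w i j))
    (D : ℝ) (hD : 0 < D) :
    ∃ C : ℝ, 0 < C ∧
      ∀ (ε : ℝ), 0 < ε →
      ∀ (u : ℝ → ℝ → (Fin 2 → ℝ)) (u₀ : ℝ → (Fin 2 → ℝ)),
        ContDiff ℝ (⊤ : ℕ∞) (Function.uncurry u) →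
        Measurable u₀ → (∀ x, ‖u₀ x‖ ≤ D) →
        (∀ t x, 0 ≤ t → ‖u t x‖ ≤ D) →
        (∀ x, u 0 x = ∫ y, friedrichs₁₆ ε (x - y) • u₀ y) →
        (∀ t x, 0 ≤ t →
          deriv (fun s => u s x) t + A (u t x) *ᵥ deriv (fun y => u t y) x
            = ε • deriv (deriv (u t)) x) →
        ∀ t x, 0 ≤ t → ‖deriv (fun y => u t y) x‖ ≤ C / ε := by
  obtain ⟨Λ, hΛ, hinit⟩ := init_lip
  obtain ⟨M, hM, hAM⟩ := A_bound A hA D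
  obtain ⟨θ, hθ⟩ : ∃ θ : ℝ, θ = 1 / (2 * (M + 1)) := ⟨_, rfl⟩
  have hθ0 : 0 < θ := by rw [hθ]; positivity
  have hθM : θ * (M + 1) = 1 / 2 := by rw [hθ]; field_simp
  have hθ1 : θ ≤ 1 / 2 := by nlinarith
  refine ⟨2 * (D / θ + 4 * Λ * D), by positivity, ?_⟩
  intro ε hε u u₀ hu hm hb₀ hb hu0 hpde t1 x1 ht1
  -- regularity
  have hxu : ∀ t, ContDiff ℝ (⊤ : ℕ∞) (u t) := fun t => hu.comp (contDiff_prodMk_right t)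
  have htu : ∀ x, ContDiff ℝ (⊤ : ℕ∞) (fun s => u s x) := fun x =>
    hu.comp (contDiff_prodMk_left x)
  have hx1 : ∀ t x, HasDerivAt (u t) (deriv (u t) x) x := fun t x =>
    ((hxu t).differentiable (by simp)).differentiableAt.hasDerivAt
  have hx2 : ∀ t x, HasDerivAt (deriv (u t)) (deriv (deriv (u t)) x) x := fun t x => by
    have h2 : ContDiff ℝ (1 + 1) (u t) := (hxu t).of_le (by
      rw [one_add_one_eq_two]; exact WithTop.coe_le_coe.2 le_top)
    have := (contDiff_succ_iff_deriv.1 h2).2.2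
    exact (this.differentiable (by simp)).differentiableAt.hasDerivAt
  have hdt : ∀ t x, HasDerivAt (fun s => u s x) (deriv (fun s => u s x) t) t := fun t x =>
    ((htu x).differentiable (by simp)).differentiableAt.hasDerivAt
  have hcx : Continuous fun p : ℝ × ℝ => deriv (u p.1) p.2 := by
    have e : (fun p : ℝ × ℝ => deriv (u p.1) p.2) =
        fun p => fderiv ℝ (Function.uncurry u) p (0, 1) := by
      funext p
      have h1 : HasFDerivAt (Function.uncurry u) (fderiv ℝ (Function.uncurry u) p) (p.1, p.2) :=
        (hu.differentiable (by simp)).differentiableAt.hasFDerivAt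
      have h2 : HasDerivAt (fun y : ℝ => (p.1, y)) ((0:ℝ), (1:ℝ)) p.2 :=
        (hasDerivAt_const p.2 p.1).prodMk (hasDerivAt_id p.2)
      exact (h1.comp_hasDerivAt p.2 h2).deriv
    rw [e]
    exact (hu.continuous_fderiv (by simp)).clm_apply continuous_const
  -- components
  have hd1 : ∀ t i, deriv (fun y => u t y i) = fun y => deriv (u t) y i := fun t i =>
    funext fun y => ((hasDerivAt_pi.1 (hx1 t y)) i).deriv
  have hd2 : ∀ t i y, deriv (deriv (fun y => u t y i)) y = deriv (deriv (u t)) y i :=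
    fun t i y => by rw [hd1]; exact ((hasDerivAt_pi.1 (hx2 t y)) i).deriv
  have hd3 : ∀ t i y, deriv (fun s => u s y i) t = deriv (fun s => u s y) t i :=
    fun t i y => ((hasDerivAt_pi.1 (hdt t y)) i).deriv
  have hsrc : ∀ t x i, 0 ≤ t → |deriv (fun s => u s x i) t
      - ε * deriv (deriv (fun y => u t y i)) x| ≤ M * ‖deriv (u t) x‖ := by
    intro t x i ht
    rw [hd2, hd3]
    have h := congrFun (hpde t x ht) i
    simp only [Pi.add_apply, Pi.smul_apply, smul_eq_mul] at h
    rw [← h]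
    have := hAM (u t x) (hb t x ht) (deriv (u t) x) i
    rw [sub_add_cancel_left, abs_neg]
    exact this
  obtain ⟨G, hGd⟩ : ∃ G, G = 4 * Λ * D / ε := ⟨_, rfl⟩
  have hG0 : 0 ≤ G := by rw [hGd]; positivity
  have hlip : ∀ i x y, |u 0 x i - u 0 y i| ≤ G * |x - y| := by
    intro i x y
    have h := hinit D hD ε hε u₀ hm hb₀ x y
    rw [← hu0, ← hu0, ← hGd] at h
    exact (norm_le_pi_norm (u 0 x - u 0 y) i).trans h
  -- weighted maximum
  obtain ⟨W, hW⟩ : ∃ W : ℝ × ℝ → ℝ, W = fun p => (ε - |p.2 - x1|) * ‖deriv (u p.1) p.2‖ :=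
    ⟨_, rfl⟩
  have hWc : Continuous W := by rw [hW]; fun_prop
  obtain ⟨⟨t0, x0⟩, ⟨ht0, hx0⟩, hmax⟩ :=
    ((isCompact_Icc (a := (0:ℝ)) (b := t1)).prod (isCompact_Icc (a := x1 - ε) (b := x1 + ε))).exists_isMaxOn
    ⟨(t1, x1), ⟨⟨ht1, le_rfl⟩, ⟨by simp [hε.le], by simp [hε.le]⟩⟩⟩ hWc.continuousOn
  have hmax' : ∀ t x, 0 ≤ t → t ≤ t1 → |x - x1| ≤ ε → W (t, x) ≤ W (t0, x0) := by
    intro t x a b c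
    have := abs_le.1 c
    exact hmax (show (t, x) ∈ _ from ⟨⟨a, b⟩, ⟨by linarith, by linarith⟩⟩)
  obtain ⟨L, hLd⟩ : ∃ L, L = W (t0, x0) := ⟨_, rfl⟩
  rw [← hLd] at hmax'
  suffices hL : L ≤ 2 * (D / θ + 4 * Λ * D) by
    have h := (hmax' t1 x1 ht1 le_rfl (by simp [hε.le])).trans hL
    rw [hW] at h
    simp only [sub_self, abs_zero, sub_zero] at h
    rw [le_div_iff₀ hε, mul_comm]
    exact h
  rcases le_or_gt L 0 with hL0 | hL0
  · exact hL0.trans (by positivity)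
  obtain ⟨d, hd⟩ : ∃ d, d = ε - |x0 - x1| := ⟨_, rfl⟩
  have hLW : L = d * ‖deriv (u t0) x0‖ := by rw [hLd, hW, hd]
  have hd0 : 0 < d := by
    by_contra h
    have := mul_nonpos_of_nonpos_of_nonneg (not_lt.1 h) (norm_nonneg (deriv (u t0) x0))
    linarith
  have hdε : d ≤ ε := by rw [hd]; linarith [abs_nonneg (x0 - x1)]
  have hbox : ∀ t x i, 0 ≤ t → t ≤ t0 → |x - x0| ≤ θ * d →
      |deriv (fun s => u s x i) t - ε * deriv (deriv (fun y => u t y i)) x|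
        < (M + 1) * (2 * L / d) := by
    intro t x i ht htt hxx
    have h1 : |x - x1| ≤ θ * d + |x0 - x1| :=
      (abs_sub_le x x0 x1).trans (by linarith)
    have h2 : d / 2 ≤ ε - |x - x1| := by nlinarith
    have h3 := hmax' t x ht (htt.trans ht0.2) (by linarith)
    rw [hW] at h3
    simp only at h3
    have h4 : ‖deriv (u t) x‖ ≤ 2 * L / d := by
      rw [le_div_iff₀ hd0]
      nlinarith [norm_nonneg (deriv (u t) x)]
    have h5 : 0 < 2 * L / d := by positivity
    have := hsrc t x i ht
    nlinarith
  have hF0 : 0 ≤ (M + 1) * (2 * L / d) := by positivity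
  have hui : ∀ i, ContDiff ℝ (⊤ : ℕ∞) (Function.uncurry fun t x => u t x i) := fun i =>
    (contDiff_pi.1 hu) i
  have hbi : ∀ i t x, 0 ≤ t → |u t x i| ≤ D := fun i t x ht =>
    (norm_le_pi_norm (u t x) i).trans (hb t x ht)
  have hkey : ‖deriv (u t0) x0‖ ≤
      θ * d * ((M + 1) * (2 * L / d)) / (2 * ε) + D / (θ * d) + G := by
    rw [pi_norm_le_iff_of_nonneg (by positivity)]
    intro i
    rw [Real.norm_eq_abs, abs_le']
    constructor
    · have := grad_bound (fun t x => u t x i) (hui i) ε D (θ * d) _ G t0 x0 hε (by positivity)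
        hF0 hG0 hD.le ht0.1 (hbi i) (fun t x => hbox t x i) (hlip i)
      rw [hd1] at this
      exact this
    · have := grad_bound (fun t x => - u t x i) (hui i).neg ε D (θ * d) _ G t0 x0 hε (by positivity)
        hF0 hG0 hD.le ht0.1 (fun t x ht => by rw [abs_neg]; exact hbi i t x ht)
        (fun t x a b c => by
          have h := hbox t x i a b c
          have e1 : deriv (fun s => - u s x i) t = - deriv (fun s => u s x i) t := deriv.fun_neg
          have e2 : deriv (fun y => - u t y i) = fun y => - deriv (fun y => u t y i) y :=
            funext fun y => deriv.fun_neg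
          have e3 : deriv (fun y => - deriv (fun y => u t y i) y) x
            = - deriv (deriv (fun y => u t y i)) x := deriv.fun_neg
          rw [e1, e2, e3, mul_neg, ← neg_sub', abs_neg]
          exact h)
        (fun x y => by rw [← neg_sub', abs_neg]; exact hlip i x y)
      have e2 : deriv (fun y => - u t0 y i) x0 = - deriv (fun y => u t0 y i) x0 := deriv.fun_neg
      rw [e2, hd1] at this
      exact this
  have h1 := mul_le_mul_of_nonneg_left hkey hd0.le
  rw [← hLW] at h1
  have h2 : d * (θ * d * ((M + 1) * (2 * L / d)) / (2 * ε) + D / (θ * d) + G)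
      = (θ * (M + 1)) * L * (d / ε) + D / θ + d * G := by
    field_simp
  rw [h2, hθM] at h1
  have h3 : d / ε ≤ 1 := (div_le_one hε).2 hdε
  have h4 : d * G ≤ 4 * Λ * D := by
    calc d * G ≤ ε * G := by gcongr
      _ = _ := by rw [hGd]; field_simp
  nlinarith
end
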